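/- arXiv:2410.19805 — 2 statements merged into one kernel-verified Lean document; each statement's English description precedes it below -/
import Mathlib

section
/- Let φ : [0,δ] → ℝ be continuous, strictly increasing with φ(0)=0 and φ(t)>0 for t ∈ (0,δ]. Then there exists a smooth even function ψ : [-1,1] → ℝ with ψ(0)=0, ψ(x)>0 for x ≠ 0, and ψ(x) = O(x·φ⁻¹(x)) as x → 0⁺. -/
open Set Asymptotics

/-- Every sequence of compactly supported smooth functions can be rescaled by positive constants so
that its sum is smooth and its terms are as small as prescribed. -/
theorem exists_pos_contDiff_tsum_mul {E : Type*} [NormedAddCommGroup E] [NormedSpace ℝ E]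
    {f : ℕ → E → ℝ} (hf : ∀ n, ContDiff ℝ (⊤ : ℕ∞) (f n)) (hs : ∀ n, HasCompactSupport (f n))
    {ε : ℕ → ℝ} (hε : ∀ n, 0 < ε n) :
    ∃ c : ℕ → ℝ, (∀ n, 0 < c n) ∧ ContDiff ℝ (⊤ : ℕ∞) (fun x => ∑' n, c n * f n x) ∧
      ∀ n x, |c n * f n x| ≤ (1 / 2) ^ n * ε n := by
  have hbound : ∀ n k : ℕ, ∃ C, ∀ x, ‖iteratedFDeriv ℝ k (f n) x‖ ≤ C := fun n k =>
    ((hf n).continuous_iteratedFDeriv (mod_cast le_top)).bounded_above_of_compact_support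
      ((hs n).iteratedFDeriv k)
  choose B hB using hbound
  have hB0 : ∀ n k, 0 ≤ B n k := fun n k => (norm_nonneg _).trans (hB n k 0)
  set M : ℕ → ℝ := fun n => ∑ k ∈ Finset.range (n + 1), B n k + 1
  have hMpos : ∀ n, 0 < M n := fun n =>
    add_pos_of_nonneg_of_pos (Finset.sum_nonneg fun k _ => hB0 n k) one_pos
  have hBM : ∀ n k, k ≤ n → B n k ≤ M n := fun n k hk =>
    (Finset.single_le_sum (f := B n) (fun j _ => hB0 n j)
      (Finset.mem_range.2 (Nat.lt_succ_of_le hk))).trans (le_add_of_nonneg_right zero_le_one)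
  set c : ℕ → ℝ := fun n => (1 / 2) ^ n * min 1 (ε n) / M n
  have hmin : ∀ n, 0 < min 1 (ε n) := fun n => lt_min one_pos (hε n)
  have hcpos : ∀ n, 0 < c n := fun n => div_pos (mul_pos (by positivity) (hmin n)) (hMpos n)
  have hderiv : ∀ n k, k ≤ n → ∀ x,
      c n * ‖iteratedFDeriv ℝ k (f n) x‖ ≤ (1 / 2) ^ n * min 1 (ε n) := fun n k hk x => by
    calc c n * ‖iteratedFDeriv ℝ k (f n) x‖ ≤ c n * M n :=
          mul_le_mul_of_nonneg_left ((hB n k x).trans (hBM n k hk)) (hcpos n).le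
      _ = _ := div_mul_cancel₀ _ (hMpos n).ne'
  refine ⟨c, hcpos, ?_, fun n x => ?_⟩
  · refine contDiff_tsum_of_eventually (v := fun _ n => (1 / 2 : ℝ) ^ n)
      (fun n => contDiff_const.mul (hf n)) (fun _ _ => summable_geometric_two) fun k _ => ?_
    rw [Nat.cofinite_eq_atTop]
    filter_upwards [Filter.eventually_ge_atTop k] with n hn x
    have hsmul := iteratedFDeriv_const_smul_apply' (𝕜 := ℝ) (i := k) (a := c n) (x := x)
      ((hf n).contDiffAt.of_le (mod_cast le_top))
    simp only [smul_eq_mul] at hsmul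
    rw [hsmul, norm_smul, Real.norm_of_nonneg (hcpos n).le]
    exact (hderiv n k hn x).trans (mul_le_of_le_one_right (by positivity) (min_le_left _ _))
  · have h0 := hderiv n 0 (Nat.zero_le n) x
    rw [norm_iteratedFDeriv_zero, Real.norm_eq_abs] at h0
    rw [abs_mul, abs_of_pos (hcpos n)]
    exact h0.trans (mul_le_mul_of_nonneg_left (min_le_right _ _) (by positivity))

/-- A smooth even compactly supported bump vanishing on `[-a, a]` and positive on
`[-1, 1] \ [-a, a]`. -/
theorem exists_even_contDiff_pos_of_lt_abs {a : ℝ} (ha : 0 ≤ a) :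
    ∃ f : ℝ → ℝ, ContDiff ℝ (⊤ : ℕ∞) f ∧ HasCompactSupport f ∧ (∀ x, f (-x) = f x) ∧
      (∀ x, 0 ≤ f x) ∧ (∀ x, |x| ≤ a → f x = 0) ∧ ∀ x ∈ Icc (-1 : ℝ) 1, a < |x| → 0 < f x := by
  let χ : ContDiffBump (0 : ℝ) := ⟨1, 2, one_pos, one_lt_two⟩
  refine ⟨fun x => χ x * expNegInvGlue (x ^ 2 - a ^ 2), ?_, χ.hasCompactSupport.mul_right,
    fun x => ?_, fun x => mul_nonneg χ.nonneg (expNegInvGlue.nonneg _), fun x hx => ?_,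
    fun x hx hax => mul_pos (χ.pos_of_mem_ball ?_) (expNegInvGlue.pos_of_pos ?_)⟩
  · exact χ.contDiff.mul
      (expNegInvGlue.contDiff.comp ((contDiff_id.pow 2).sub contDiff_const))
  · simp only [χ.neg, neg_sq]
  · have : x ^ 2 ≤ a ^ 2 := sq_le_sq.2 (by rwa [abs_of_nonneg ha])
    simp only [expNegInvGlue.zero_of_nonpos (sub_nonpos.2 this), mul_zero]
  · rw [Metric.mem_ball, Real.dist_eq, sub_zero]
    exact (abs_le.2 hx).trans_lt one_lt_two
  · exact sub_pos.2 (sq_lt_sq.2 (by rwa [abs_of_nonneg ha]))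

/-- Below any positive monotone function on `(0, r]` there is, up to a factor `2`, a smooth even
function on the line vanishing at `0` and positive on `[-1, 1] \ {0}`. -/
theorem exists_even_contDiff_le_of_monotoneOn {r : ℝ} (hr : 0 < r) {g : ℝ → ℝ}
    (hg : MonotoneOn g (Ioc 0 r)) (hgpos : ∀ x ∈ Ioc 0 r, 0 < g x) :
    ∃ ψ : ℝ → ℝ, ContDiff ℝ (⊤ : ℕ∞) ψ ∧ (∀ x, ψ (-x) = ψ x) ∧ ψ 0 = 0 ∧ (∀ x, 0 ≤ ψ x) ∧
      (∀ x ∈ Icc (-1 : ℝ) 1, x ≠ 0 → 0 < ψ x) ∧ ∀ x ∈ Ioc 0 r, ψ x ≤ 2 * g x := by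
  set a : ℕ → ℝ := fun n => r / (n + 1)
  have ha_mem : ∀ n, a n ∈ Ioc 0 r := fun n =>
    ⟨by positivity, div_le_self hr.le (le_add_of_nonneg_left n.cast_nonneg)⟩
  choose f hfs hfc hfe hf0 hfz hfp using
    fun n => exists_even_contDiff_pos_of_lt_abs (ha_mem n).1.le
  obtain ⟨c, hc, hsmooth, hle⟩ :=
    exists_pos_contDiff_tsum_mul hfs hfc fun n => hgpos _ (ha_mem n)
  have hterm : ∀ x n, 0 ≤ c n * f n x := fun x n => mul_nonneg (hc n).le (hf0 n x)
  have hterm_le : ∀ x n, c n * f n x ≤ (1 / 2) ^ n * g (a n) := fun x n =>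
    (le_abs_self _).trans (hle n x)
  have hga : ∀ n, g (a n) ≤ g r := fun n => hg (ha_mem n) ⟨hr, le_rfl⟩ (ha_mem n).2
  have hsum : ∀ x, Summable fun n => c n * f n x := fun x =>
    Summable.of_nonneg_of_le (hterm x)
      (fun n => (hterm_le x n).trans (mul_le_mul_of_nonneg_left (hga n) (by positivity)))
      (summable_geometric_two.mul_right (g r))
  refine ⟨_, hsmooth, fun x => by simp only [hfe], ?_, fun x => tsum_nonneg (hterm x),
    fun x hx hx0 => ?_, fun x hx => ?_⟩
  · simp [hfz _ 0 (abs_zero.trans_le (ha_mem _).1.le)]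
  · obtain ⟨n, hn⟩ := exists_nat_one_div_lt (div_pos (abs_pos.2 hx0) hr)
    have han : a n < |x| := by
      rw [lt_div_iff₀ hr] at hn
      rwa [show a n = 1 / (n + 1) * r by ring]
    exact (hsum x).tsum_pos (hterm x) n (mul_pos (hc n) (hfp n x hx han))
  · have hxle : ∀ n, c n * f n x ≤ (1 / 2) ^ n * g x := fun n => by
      rcases le_or_gt |x| (a n) with h | h
      · rw [hfz n x h, mul_zero]
        exact mul_nonneg (by positivity) (hgpos x hx).le
      · rw [abs_of_pos hx.1] at h
        exact (hterm_le x n).trans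
          (mul_le_mul_of_nonneg_left (hg (ha_mem n) hx h.le) (by positivity))
    calc ∑' n, c n * f n x ≤ ∑' n : ℕ, (1 / 2 : ℝ) ^ n * g x :=
          (hsum x).tsum_le_tsum hxle (summable_geometric_two.mul_right _)
      _ = 2 * g x := by rw [tsum_mul_right, tsum_geometric_two]

theorem stmt5 (δ : ℝ) (hδ : 0 < δ) (φ : ℝ → ℝ)
    (hφc : ContinuousOn φ (Icc 0 δ)) (hφmono : StrictMonoOn φ (Icc 0 δ))
    (hφ0 : φ 0 = 0) (hφpos : ∀ t ∈ Ioc 0 δ, 0 < φ t) :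
    ∃ ψ : ℝ → ℝ, ContDiff ℝ (⊤ : ℕ∞) ψ ∧ (∀ x, ψ (-x) = ψ x) ∧ ψ 0 = 0 ∧
      (∀ x ∈ Icc (-1:ℝ) 1, x ≠ 0 → 0 < ψ x) ∧
      ψ =O[nhdsWithin 0 (Ioi 0)]
        (fun x => x * Function.invFunOn φ (Icc 0 δ) x) := by
  have hr : 0 < φ δ := hφpos δ ⟨hδ, le_rfl⟩
  have hsurj : SurjOn φ (Icc 0 δ) (Icc 0 (φ δ)) := by
    simpa only [SurjOn, hφ0] using intermediate_value_Icc hδ.le hφc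
  have hmem : ∀ x ∈ Ioc 0 (φ δ), Function.invFunOn φ (Icc 0 δ) x ∈ Icc 0 δ := fun x hx =>
    Function.invFunOn_mem (hsurj (Ioc_subset_Icc_self hx))
  have heq : ∀ x ∈ Ioc 0 (φ δ), φ (Function.invFunOn φ (Icc 0 δ) x) = x := fun x hx =>
    Function.invFunOn_eq (hsurj (Ioc_subset_Icc_self hx))
  have hpos : ∀ x ∈ Ioc 0 (φ δ), 0 < Function.invFunOn φ (Icc 0 δ) x := fun x hx =>
    (hmem x hx).1.lt_of_ne fun h => hx.1.ne (by rw [← heq x hx, ← h, hφ0])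
  have hmono : MonotoneOn (Function.invFunOn φ (Icc 0 δ)) (Ioc 0 (φ δ)) := fun x hx y hy hxy =>
    (hφmono.le_iff_le (hmem x hx) (hmem y hy)).1 (by rwa [heq x hx, heq y hy])
  obtain ⟨ψ, hψs, hψe, hψ0, hψnn, hψpos, hψle⟩ := exists_even_contDiff_le_of_monotoneOn hr
    (monotoneOn_id.mul hmono (fun x hx => hx.1.le) fun x hx => (hpos x hx).le)
    fun x hx => mul_pos hx.1 (hpos x hx)
  refine ⟨ψ, hψs, hψe, hψ0, hψpos, IsBigO.of_bound 2 ?_⟩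
  filter_upwards [Ioc_mem_nhdsGT hr] with x hx
  rw [Real.norm_of_nonneg (hψnn x), Real.norm_of_nonneg (mul_pos hx.1 (hpos x hx)).le]
  exact hψle x hx
end

section
/- Main theorem: Let Ω = B(0,1) ⊂ ℝ². Given any function φ : [0,δ] → ℝ with δ>0, φ(0)=0, φ(t)>0 for 0<t≤δ, and φ(t)→0 as t→0⁺, there exist a smooth strictly convex function u : closure(Ω) → ℝ and a Lipschitz function h : Ω → ℝ compactly supported in Ω, with |Ω \ Ω_c| = 0 (Ω_c the union of all open subsets of Ω on which h is convex), such that liminf_{t→0⁺} (u_t(0) - (u_t)**(0))/(t·φ(t)) > 0, where u_t = u + t·h and ** denotes Γ-regularization on Ω. -/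
open Set Filter MeasureTheory

/-- The Γ-regularization of `u`: pointwise supremum of all affine functions on `ℝⁿ`
that are `≤ u` on `Ω`. -/
noncomputable def gammaReg {n : ℕ} (Ω : Set (EuclideanSpace ℝ (Fin n)))
    (u : EuclideanSpace ℝ (Fin n) → ℝ) (x : EuclideanSpace ℝ (Fin n)) : ℝ :=
  sSup {c | ∃ a : EuclideanSpace ℝ (Fin n) →ᵃ[ℝ] ℝ, (∀ y ∈ Ω, a y ≤ u y) ∧ c = a x}

theorem exists_smul_iteratedFDeriv_le {g : ℝ → ℝ} (hg : ContDiff ℝ (⊤ : ℕ∞) g)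
    (hc : HasCompactSupport g) (n : ℕ) {ε : ℝ} (hε : 0 < ε) :
    ∃ r : ℝ, 0 < r ∧ ∀ i ≤ n, ∀ x, ‖iteratedFDeriv ℝ i (r • g) x‖ ≤ ε := by
  have hbdd : ∀ i, ∃ R, ∀ x, ‖iteratedFDeriv ℝ i g x‖ ≤ R := by
    intro i
    obtain ⟨R, hR⟩ := ((hg.continuous_iteratedFDeriv
      (mod_cast le_top : (i : WithTop ℕ∞) ≤ _)).norm.bddAbove_range_of_hasCompactSupport
        ((hc.iteratedFDeriv i).comp_left norm_zero))
    exact ⟨R, fun x => hR (mem_range_self x)⟩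
  choose R hR using hbdd
  set M := 1 + ∑ i ∈ Finset.range (n + 1), |R i|
  have hM : 0 < M := by positivity
  refine ⟨ε / M, by positivity, fun i hi x => ?_⟩
  have hRM : R i ≤ M := by
    have h1 : |R i| ≤ ∑ i ∈ Finset.range (n + 1), |R i| :=
      Finset.single_le_sum (f := fun i => |R i|) (fun _ _ => abs_nonneg _)
        (Finset.mem_range.2 (by omega))
    have h2 := le_abs_self (R i)
    simp only [M]
    linarith
  rw [iteratedFDeriv_const_smul_apply (hg.contDiffAt.of_le (mod_cast le_top)), norm_smul,
    Real.norm_of_nonneg (by positivity)]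
  calc ε / M * ‖iteratedFDeriv ℝ i g x‖ ≤ ε / M * M := by
        gcongr
        exact (hR i x).trans hRM
    _ = ε := by field_simp

/-- A smooth function positive on a punctured neighbourhood of `0` and flatter at `0` than a
prescribed rate. -/
theorem exists_contDiff_pos_flat {η : ℕ → ℝ} (hη : ∀ n, 0 < η n) :
    ∃ w : ℝ → ℝ, ContDiff ℝ (⊤ : ℕ∞) w ∧ (∀ x, 0 ≤ w x) ∧ (∀ x, x ≠ 0 → |x| < 2 → 0 < w x) ∧
      ∀ t s, 0 ≤ t → (∀ n : ℕ, 1 / ((n : ℝ) + 1) < |s| → η n ≤ t) → w s ≤ t := by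
  have hopen : ∀ n : ℕ, IsOpen {x : ℝ | 1 / ((n : ℝ) + 1) < |x| ∧ |x| < 2} := fun n =>
    (isOpen_lt continuous_const continuous_abs).inter (isOpen_lt continuous_abs continuous_const)
  choose g hgs hg hgr using fun n => (hopen n).exists_contDiff_support_eq (n := ⊤)
  have hg0 : ∀ n x, 0 ≤ g n x := fun n x => (hgr n (mem_range_self x)).1
  have hgc : ∀ n, HasCompactSupport (g n) := by
    intro n
    refine HasCompactSupport.intro (isCompact_Icc (a := (-2 : ℝ)) (b := 2)) fun x hx => ?_
    by_contra hne
    have hx' : x ∈ Function.support (g n) := hne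
    rw [hgs n] at hx'
    exact hx ⟨(abs_lt.1 hx'.2).1.le, (abs_lt.1 hx'.2).2.le⟩
  have hd : ∀ n : ℕ, 0 < min 1 (η n) * (1 / 2 / 2 ^ n) := fun n =>
    mul_pos (lt_min one_pos (hη n)) (by positivity)
  choose r hr0 hr using fun n => exists_smul_iteratedFDeriv_le (hg n) (hgc n) n (hd n)
  have hgeom : HasSum (fun n : ℕ => (1 : ℝ) / 2 / 2 ^ n) 1 := hasSum_geometric_two' 1
  have hpow : ∀ n : ℕ, (0 : ℝ) < 1 / 2 / 2 ^ n := fun n => by positivity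
  have hle : ∀ n x, (r n • g n) x ≤ min 1 (η n) * (1 / 2 / 2 ^ n) := fun n x => by
    have h := hr n 0 (Nat.zero_le _) x
    rw [norm_iteratedFDeriv_zero] at h
    exact (le_abs_self _).trans h
  have hnn : ∀ n x, 0 ≤ (r n • g n) x := fun n x => mul_nonneg (hr0 n).le (hg0 n x)
  have hle1 : ∀ n : ℕ, min 1 (η n) * ((1 : ℝ) / 2 / 2 ^ n) ≤ 1 / 2 / 2 ^ n := fun n =>
    mul_le_of_le_one_left (hpow n).le (min_le_left _ _)
  have hS : ∀ x, Summable fun n => (r n • g n) x := fun x =>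
    Summable.of_nonneg_of_le (fun n => hnn n x) (fun n => (hle n x).trans (hle1 n)) hgeom.summable
  refine ⟨fun x => ∑' n, (r n • g n) x, ?_, fun x => tsum_nonneg fun n => hnn n x, ?_, ?_⟩
  · refine contDiff_tsum_of_eventually (v := fun _ n => 1 / 2 / 2 ^ n)
      (fun n => (hg n).const_smul (r n)) (fun _ _ => hgeom.summable) ?_
    intro i _
    simp only [Nat.cofinite_eq_atTop, Filter.eventually_atTop]
    exact ⟨i, fun n hn x => (hr n i hn x).trans (hle1 n)⟩
  · intro x hx hx2
    obtain ⟨n, hn⟩ := exists_nat_one_div_lt (abs_pos.2 hx)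
    have hmem : x ∈ Function.support (g n) := by
      rw [hgs n]
      exact ⟨hn, hx2⟩
    exact (hS x).tsum_pos (fun i => hnn i x) n
      (mul_pos (hr0 n) ((hg0 n x).lt_of_ne' hmem))
  · intro t s ht hts
    have hterm : ∀ n, (r n • g n) s ≤ t * (1 / 2 / 2 ^ n) := by
      intro n
      by_cases h : 1 / ((n : ℝ) + 1) < |s|
      · refine (hle n s).trans ?_
        gcongr
        exact (min_le_right _ _).trans (hts n h)
      · have hz : g n s = 0 := by
          by_contra hne
          have hmem : s ∈ Function.support (g n) := hne
          rw [hgs n] at hmem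
          exact h hmem.1
        simp only [Pi.smul_apply, hz, smul_zero]
        exact mul_nonneg ht (hpow n).le
    have hsum := hgeom.mul_left t
    rw [mul_one] at hsum
    exact (hS s).tsum_le_of_sum_le fun F => (Finset.sum_le_sum fun n _ => hterm n).trans
      (sum_le_hasSum F (fun n _ => mul_nonneg ht (hpow n).le) hsum)

theorem contDiff_integral_of_contDiff {w : ℝ → ℝ} (hw : ContDiff ℝ (⊤ : ℕ∞) w) :
    ContDiff ℝ (⊤ : ℕ∞) (fun x => ∫ s in (0 : ℝ)..x, w s) := by
  have hd : ∀ x, HasDerivAt (fun x => ∫ s in (0 : ℝ)..x, w s) (w x) x := fun x =>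
    hw.continuous.integral_hasStrictDerivAt 0 x |>.hasDerivAt
  rw [contDiff_infty_iff_deriv]
  refine ⟨fun x => (hd x).differentiableAt, ?_⟩
  rwa [show deriv (fun x => ∫ s in (0 : ℝ)..x, w s) = w from funext fun x => (hd x).deriv]

/-- A smooth strictly convex function on `[-1, 1]` which is flatter at `0` than a prescribed
rate. -/
theorem exists_strictConvexOn_flat {η : ℕ → ℝ} (hη : ∀ n, 0 < η n) :
    ∃ f : ℝ → ℝ, ContDiff ℝ (⊤ : ℕ∞) f ∧ StrictConvexOn ℝ (Icc (-1) 1) f ∧ f 0 = 0 ∧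
      ∀ t x, 0 ≤ t → (∀ n : ℕ, 1 / ((n : ℝ) + 1) < |x| → η n ≤ t) → f x ≤ t * |x| ^ 2 := by
  obtain ⟨w, hw, hw0, hwpos, hwt⟩ := exists_contDiff_pos_flat hη
  have hW := contDiff_integral_of_contDiff hw
  have hF := contDiff_integral_of_contDiff hW
  refine ⟨fun x => ∫ s in (0 : ℝ)..x, ∫ y in (0 : ℝ)..s, w y, hF, ?_, by simp, ?_⟩
  · refine StrictMonoOn.strictConvexOn_of_deriv (convex_Icc _ _) hF.continuous.continuousOn ?_
    rw [show deriv (fun x => ∫ s in (0 : ℝ)..x, ∫ y in (0 : ℝ)..s, w y)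
        = fun s => ∫ y in (0 : ℝ)..s, w y from
      funext fun x => (hW.continuous.integral_hasStrictDerivAt 0 x).hasDerivAt.deriv]
    rw [interior_Icc]
    intro a ha b hb hab
    have hpos : 0 < ∫ y in a..b, w y := by
      refine intervalIntegral.integral_pos hab hw.continuous.continuousOn (fun x _ => hw0 x) ?_
      by_cases h : a = 0
      · exact ⟨b, ⟨hab.le, le_rfl⟩, hwpos b (by linarith) (abs_lt.2 ⟨by linarith [hb.1],
          by linarith [hb.2]⟩)⟩
      · exact ⟨a, ⟨le_rfl, hab.le⟩, hwpos a h (abs_lt.2 ⟨by linarith [ha.1],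
          by linarith [ha.2]⟩)⟩
    have hadd := intervalIntegral.integral_add_adjacent_intervals
      (hw.continuous.intervalIntegrable (μ := volume) 0 a) (hw.continuous.intervalIntegrable a b)
    show (∫ y in (0 : ℝ)..a, w y) < ∫ y in (0 : ℝ)..b, w y
    linarith
  · intro t x ht htx
    have habs : ∀ {y z : ℝ}, y ∈ uIoc 0 z → |y| ≤ |z| := fun {y z} hy => by
      simpa using abs_sub_left_of_mem_uIcc (uIoc_subset_uIcc hy)
    have hWle : ∀ s ∈ uIoc 0 x, ‖∫ y in (0 : ℝ)..s, w y‖ ≤ t * |x| := by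
      intro s hs
      refine (intervalIntegral.norm_integral_le_of_norm_le_const (C := t) fun y hy => ?_).trans ?_
      · rw [Real.norm_of_nonneg (hw0 y)]
        exact hwt t y ht fun n hn => htx n (hn.trans_le ((habs hy).trans (habs hs)))
      · rw [sub_zero]
        exact mul_le_mul_of_nonneg_left (habs hs) ht
    have h := intervalIntegral.norm_integral_le_of_norm_le_const hWle
    rw [sub_zero, Real.norm_eq_abs] at h
    calc _ ≤ _ := le_abs_self _
      _ ≤ _ := h
      _ = t * |x| ^ 2 := by ring

theorem gammaReg_midpoint_le {n : ℕ} {Ω : Set (EuclideanSpace ℝ (Fin n))}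
    {v : EuclideanSpace ℝ (Fin n) → ℝ} {p : EuclideanSpace ℝ (Fin n)} (hp : p ∈ Ω) (hp' : -p ∈ Ω)
    {B : ℝ} (hB : 0 ≤ B) (h : v p ≤ B) (h' : v (-p) ≤ B) : gammaReg Ω v 0 ≤ B := by
  refine Real.sSup_le ?_ hB
  rintro _ ⟨a, ha, rfl⟩
  have h1 := ha p hp
  have h2 := ha (-p) hp'
  have hlin : ∀ q, a q = a.linear q + a 0 := fun q => by
    simpa using a.map_vadd 0 q
  rw [hlin] at h1 h2
  rw [map_neg] at h2
  linarith

local notation "Plane" => EuclideanSpace ℝ (Fin 2)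

/-- The pyramid of height `1 / 2` over the `ℓ¹`-ball of radius `1 / 2`. -/
noncomputable def pyramid (x : EuclideanSpace ℝ (Fin 2)) : ℝ := max 0 (1 / 2 - (|x 0| + |x 1|))

theorem exists_lipschitzWith_pyramid : ∃ K : NNReal, LipschitzWith K pyramid := by
  have h : ∀ i : Fin 2, LipschitzWith 1 fun x : Plane => |x i| := fun i =>
    LipschitzWith.of_dist_le_mul fun x y => by
      rw [Real.dist_eq, NNReal.coe_one, one_mul, dist_eq_norm]
      exact (abs_abs_sub_abs_le_abs_sub _ _).trans (PiLp.norm_apply_le (x - y) i)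
  exact ⟨_, ((LipschitzWith.const (1 / 2 : ℝ)).sub ((h 0).add (h 1))).const_max 0⟩

theorem support_pyramid_subset : Function.support pyramid ⊆ Metric.closedBall 0 (1 / 2) := by
  intro x hx
  rw [Function.mem_support, pyramid] at hx
  have hlt : |x 0| + |x 1| < 1 / 2 := by
    by_contra h
    exact hx (max_eq_left (by linarith))
  rw [mem_closedBall_zero_iff, EuclideanSpace.norm_eq]
  refine Real.sqrt_le_iff.2 ⟨by norm_num, ?_⟩
  simp only [Fin.sum_univ_two, Real.norm_eq_abs]
  nlinarith [abs_nonneg (x 0), abs_nonneg (x 1)]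

theorem hasCompactSupport_pyramid : HasCompactSupport pyramid :=
  HasCompactSupport.of_support_subset_isCompact (isCompact_closedBall 0 (1 / 2))
    support_pyramid_subset

theorem tsupport_pyramid_subset : tsupport pyramid ⊆ Metric.ball 0 1 :=
  (closure_minimal support_pyramid_subset Metric.isClosed_closedBall).trans
    (Metric.closedBall_subset_ball (by norm_num))

theorem volume_line_eq_zero (a b c : ℝ) (hab : a ≠ 0 ∨ b ≠ 0) :
    volume {x : Plane | a * x 0 + b * x 1 = c} = 0 := by
  let L : Plane →ₗ[ℝ] ℝ :=
    a • (EuclideanSpace.proj 0 : Plane →L[ℝ] ℝ).toLinearMap +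
      b • (EuclideanSpace.proj 1 : Plane →L[ℝ] ℝ).toLinearMap
  have hL : ∀ x, L x = a * x 0 + b * x 1 := fun x => by simp [L]
  let S : AffineSubspace ℝ Plane := (AffineSubspace.mk' c ⊥).comap L.toAffineMap
  have hS : (S : Set Plane) = {x | a * x 0 + b * x 1 = c} := by
    ext x
    simp [S, hL, AffineSubspace.mem_mk', sub_eq_zero]
  rw [← hS]
  refine Measure.addHaar_affineSubspace volume S fun htop => ?_
  have hmem : ∀ x : Plane, a * x 0 + b * x 1 = c := fun x => by
    have hx : x ∈ (S : Set Plane) := by simp [htop]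
    rwa [hS] at hx
  have h0 := hmem 0
  have h1 := hmem !₂[1, 0]
  have h2 := hmem !₂[0, 1]
  simp at h0 h1 h2
  rcases hab with h | h
  · exact h (h1.trans h0.symm)
  · exact h (h2.trans h0.symm)

theorem exists_eventually_abs_eq_mul {x : Plane} {i : Fin 2} (hx : x i ≠ 0) :
    ∃ s : ℝ, (s = 1 ∨ s = -1) ∧ ∀ᶠ y : Plane in nhds x, |y i| = s * y i := by
  have hc : Continuous fun y : Plane => y i := by fun_prop
  rcases hx.lt_or_gt with h | h
  · refine ⟨-1, Or.inr rfl, ?_⟩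
    filter_upwards [hc.continuousAt.eventually_lt_const h] with y hy
    rw [abs_of_neg hy, neg_one_mul]
  · refine ⟨1, Or.inl rfl, ?_⟩
    filter_upwards [hc.continuousAt.eventually_const_lt h] with y hy
    rw [abs_of_pos hy, one_mul]

theorem exists_eventually_pyramid_eq {x : Plane} (h0 : x 0 ≠ 0) (h1 : x 1 ≠ 0)
    (h : ∀ a b : ℝ, (a = 1 ∨ a = -1) → (b = 1 ∨ b = -1) → a * x 0 + b * x 1 ≠ 1 / 2) :
    ∃ a b c : ℝ, ∀ᶠ y : Plane in nhds x, pyramid y = a * y 0 + b * y 1 + c := by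
  obtain ⟨a, ha, hay⟩ := exists_eventually_abs_eq_mul h0
  obtain ⟨b, hb, hby⟩ := exists_eventually_abs_eq_mul h1
  have hc : Continuous fun y : Plane => a * y 0 + b * y 1 := by fun_prop
  rcases (h a b ha hb).lt_or_gt with hlt | hlt
  · refine ⟨-a, -b, 1 / 2, ?_⟩
    filter_upwards [hay, hby, hc.continuousAt.eventually_lt_const hlt] with y h1 h2 h3
    rw [pyramid, h1, h2, max_eq_right (by linarith)]
    ring
  · refine ⟨0, 0, 0, ?_⟩
    filter_upwards [hay, hby, hc.continuousAt.eventually_const_lt hlt] with y h1 h2 h3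
    rw [pyramid, h1, h2, max_eq_left (by linarith)]
    ring

theorem volume_diff_convex_pyramid {Ω : Set (EuclideanSpace ℝ (Fin 2))} (hΩ : IsOpen Ω) :
    volume (Ω \ ⋃₀ {U | U ⊆ Ω ∧ IsOpen U ∧ ConvexOn ℝ U pyramid}) = 0 := by
  let N : Set Plane := {x | 1 * x 0 + 0 * x 1 = 0} ∪ {x | 0 * x 0 + 1 * x 1 = 0} ∪
    ({x | 1 * x 0 + 1 * x 1 = 1 / 2} ∪ {x | 1 * x 0 + (-1) * x 1 = 1 / 2} ∪
    ({x | (-1) * x 0 + 1 * x 1 = 1 / 2} ∪ {x | (-1) * x 0 + (-1) * x 1 = 1 / 2}))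
  have hN : volume N = 0 := by
    refine measure_union_null (measure_union_null ?_ ?_) (measure_union_null
      (measure_union_null ?_ ?_) (measure_union_null ?_ ?_)) <;>
    exact volume_line_eq_zero _ _ _ (by norm_num)
  refine measure_mono_null (fun x hx => ?_) hN
  by_contra hxN
  simp only [N, mem_union, mem_ofPred_eq, not_or] at hxN
  obtain ⟨⟨hx0, hx1⟩, ⟨hpp, hpm⟩, hmp, hmm⟩ := hxN
  obtain ⟨a, b, c, habc⟩ := exists_eventually_pyramid_eq (x := x)
    (by simpa using hx0) (by simpa using hx1) (by
      rintro a b (rfl | rfl) (rfl | rfl)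
      exacts [hpp, hpm, hmp, hmm])
  obtain ⟨ε, hε, hball⟩ := Metric.mem_nhds_iff.1 (habc.and (hΩ.mem_nhds hx.1))
  refine hx.2 ⟨Metric.ball x ε, ⟨fun y hy => (hball hy).2, Metric.isOpen_ball,
    convex_ball x ε, ?_⟩, Metric.mem_ball_self hε⟩
  intro y hy z hz α β hα hβ hαβ
  rw [(hball hy).1, (hball hz).1, (hball (convex_ball x ε hy hz hα hβ hαβ)).1]
  simp only [PiLp.add_apply, PiLp.smul_apply, smul_eq_mul]
  refine le_of_eq ?_
  linear_combination (-c) * hαβ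

theorem StrictConvexOn.sum_coordinates {f : ℝ → ℝ} (hf : StrictConvexOn ℝ (Icc (-1) 1) f) :
    StrictConvexOn ℝ (Metric.closedBall (0 : EuclideanSpace ℝ (Fin 2)) 1)
      fun x => f (x 0) + f (x 1) := by
  have hmem : ∀ {x : Plane}, x ∈ Metric.closedBall (0 : Plane) 1 → ∀ i, x i ∈ Icc (-1 : ℝ) 1 :=
    fun {x} hx i => abs_le.1 ((PiLp.norm_apply_le x i).trans (mem_closedBall_zero_iff.1 hx))
  refine ⟨convex_closedBall _ _, fun x hx y hy hxy a b ha hb hab => ?_⟩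
  have hle := fun i => hf.convexOn.2 (hmem hx i) (hmem hy i) ha.le hb.le hab
  have hlt := fun i (h : x i ≠ y i) => hf.2 (hmem hx i) (hmem hy i) h ha hb hab
  have hle0 := hle 0
  have hle1 := hle 1
  simp only [PiLp.add_apply, PiLp.smul_apply, smul_eq_mul] at hle0 hle1 hlt ⊢
  by_cases h0 : x 0 = y 0
  · have h1 : x 1 ≠ y 1 := fun h1 => hxy (by ext i; fin_cases i <;> assumption)
    linarith [hlt 1 h1]
  · linarith [hlt 0 h0]

theorem stmt15 (Ω : Set (EuclideanSpace ℝ (Fin 2)))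
    (hΩ : Ω = Metric.ball 0 1)
    (δ : ℝ) (hδ : 0 < δ) (φ : ℝ → ℝ) (hφ0 : φ 0 = 0)
    (hφpos : ∀ t ∈ Ioc 0 δ, 0 < φ t)
    (hφlim : Tendsto φ (nhdsWithin 0 (Ioi 0)) (nhds 0)) :
    ∃ u h : EuclideanSpace ℝ (Fin 2) → ℝ,
      ContDiffOn ℝ (⊤ : ℕ∞) u (Metric.closedBall 0 1) ∧
      StrictConvexOn ℝ (Metric.closedBall 0 1) u ∧
      (∃ K : NNReal, LipschitzWith K h) ∧
      HasCompactSupport h ∧ tsupport h ⊆ Ω ∧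
      volume (Ω \ ⋃₀ {U | U ⊆ Ω ∧ IsOpen U ∧ ConvexOn ℝ U h}) = 0 ∧
      (0 : EReal) < liminf (fun t =>
        ((((u 0 + t * h 0) -
            gammaReg Ω (fun x => u x + t * h x) 0) / (t * φ t) : ℝ) : EReal))
        (nhdsWithin 0 (Ioi 0)) := by
  subst hΩ
  have hη : ∀ n : ℕ, ∃ η : ℝ, 0 < η ∧ ∀ t ∈ Ioo 0 η, φ t < 1 / ((n : ℝ) + 1) := by
    intro n
    have hev := hφlim.eventually_lt_const (Nat.one_div_pos_of_nat (α := ℝ) (n := n))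
    obtain ⟨η, hη, hsub⟩ := (mem_nhdsGT_iff_exists_Ioo_subset).1 hev
    exact ⟨η, hη, fun t ht => hsub ht⟩
  choose η hη0 hη using hη
  obtain ⟨f, hf, hfc, hf0, hft⟩ := exists_strictConvexOn_flat hη0
  refine ⟨fun x => f (x 0) + f (x 1), pyramid, ?_, hfc.sum_coordinates,
    exists_lipschitzWith_pyramid, hasCompactSupport_pyramid, tsupport_pyramid_subset,
    volume_diff_convex_pyramid Metric.isOpen_ball, ?_⟩
  · exact ContDiff.contDiffOn (by fun_prop)
  refine lt_of_lt_of_le (b := ((1 / 2 : ℝ) : EReal)) (by exact_mod_cast one_half_pos) ?_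
  refine le_liminf_of_le ?_ ?_
  · isBoundedDefault
  filter_upwards [hφlim.eventually_lt_const (show (0 : ℝ) < 1 / 2 by norm_num),
    Ioc_mem_nhdsGT hδ] with t ht2 htδ
  have ht : 0 < t := htδ.1
  have hr := hφpos t htδ
  set r := φ t with hr_def
  have hflat : ∀ x, |x| = r → f x ≤ t * r / 2 := by
    intro x hx
    refine (hft t x ht.le fun n hn => ?_).trans ?_
    · by_contra! hlt
      exact (hη n t ⟨ht, hlt⟩).not_gt (by rwa [← hr_def, ← hx])
    · rw [hx]
      nlinarith [mul_pos ht hr]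
  let p : Plane := !₂[r, 0]
  have hp : ‖p‖ = r := by simp [p, EuclideanSpace.norm_eq, Real.sqrt_sq hr.le]
  have hgamma : gammaReg (Metric.ball 0 1) (fun x : Plane => f (x 0) + f (x 1) + t * pyramid x) 0
      ≤ t * r / 2 + t * (1 / 2 - r) := by
    have hval : pyramid p = 1 / 2 - r := by
      simpa [pyramid, p, abs_of_pos hr] using ht2.le
    have hval_neg : pyramid (-p) = 1 / 2 - r := by
      simpa [pyramid, p, abs_of_pos hr] using ht2.le
    refine gammaReg_midpoint_le (p := p) ?_ ?_ ?_ ?_ ?_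
    · rw [mem_ball_zero_iff, hp]; linarith
    · rw [mem_ball_zero_iff, norm_neg, hp]; linarith
    · nlinarith [mul_pos ht hr]
    · rw [hval]
      simp [p, hf0, -one_div]
      linarith [hflat r (abs_of_pos hr)]
    · rw [hval_neg]
      simp [p, hf0, -one_div]
      linarith [hflat (-r) (by rw [abs_neg, abs_of_pos hr])]
  have hpyr : pyramid 0 = 1 / 2 := by norm_num [pyramid]
  rw [EReal.coe_le_coe_iff, le_div_iff₀ (mul_pos ht hr), hpyr]
  simp only [PiLp.zero_apply, hf0]
  linarith
end
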